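/- Let integers M_p, M_s satisfy 1 ≤ M_p < M_s, and let β_k > 0 and λ_k ≥ 0 for k ∈ {1,…,M_s}. There exist reals η_1,…,η_{M_s} with 0 ≤ η_k ≤ 1/M_p for every k, Σ_{k=1}^{M_s} η_k = 1, and λ_k ≤ M_p η_k β_k for every k, if and only if Σ_{k=1}^{M_s} λ_k/β_k ≤ M_p and λ_k ≤ β_k for every k. In particular, the stability region of the orthogonal system with M_p symmetric primary bands and M_p < M_s secondary users is { (λ_1,…,λ_{M_s}) : λ_k ≥ 0, Σ_{k=1}^{M_s} λ_k/β_k ≤ M_p, λ_k ≤ β_k ∀k }. -/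

import Mathlib

/-!
Write `x k = lam k / β k`. The service constraint says `x k ≤ Mp * η k`, so necessity follows by
summing it and by using `Mp * η k ≤ 1`. For sufficiency, `Mp * η` must lie in the box between `x`
and `1` and have total `Mp`. The total is affine along the segment from `x` to the all-ones vector,
running from `∑ x ≤ Mp` to `Ms > Mp`, so some point of that segment has total exactly `Mp`.
-/

/-- stability region with `Mp` symmetric primary bands and `Mp < Ms` users. -/
theorem symmetric_bands_stability (Mp Ms : ℕ) (hMp : 1 ≤ Mp) (hMpMs : Mp < Ms)
    (β lam : Fin Ms → ℝ) (hβ : ∀ k, 0 < β k) (hlam : ∀ k, 0 ≤ lam k) :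
    (∃ η : Fin Ms → ℝ, (∀ k, 0 ≤ η k ∧ η k ≤ 1 / (Mp : ℝ)) ∧ (∑ k, η k = 1) ∧
      ∀ k, lam k ≤ (Mp : ℝ) * η k * β k) ↔
    ((∑ k, lam k / β k ≤ (Mp : ℝ)) ∧ ∀ k, lam k ≤ β k) := by
  have hM : (0 : ℝ) < Mp := by exact_mod_cast hMp
  have hMs : (Mp : ℝ) < Ms := by exact_mod_cast hMpMs
  constructor
  · rintro ⟨η, hη, hsum, hserv⟩
    have hx : ∀ k, lam k / β k ≤ Mp * η k := fun k => (div_le_iff₀ (hβ k)).2 (hserv k)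
    refine ⟨?_, fun k => ?_⟩
    · calc ∑ k, lam k / β k ≤ ∑ k, (Mp : ℝ) * η k := Finset.sum_le_sum fun k _ => hx k
        _ = Mp := by rw [← Finset.mul_sum, hsum, mul_one]
    · have h1 : (Mp : ℝ) * η k ≤ 1 := by
        have := (le_div_iff₀ hM).1 (hη k).2
        linarith
      exact (div_le_one (hβ k)).1 ((hx k).trans h1)
  · rintro ⟨hS, hle⟩
    set S := ∑ k, lam k / β k with hSdef
    have hx0 : ∀ k, 0 ≤ lam k / β k := fun k => div_nonneg (hlam k) (hβ k).le
    have hx1 : ∀ k, lam k / β k ≤ 1 := fun k => (div_le_one (hβ k)).2 (hle k)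
    have hd : 0 < (Ms : ℝ) - S := by linarith
    -- `t` is the parameter at which the segment from `x` to the all-ones vector has total `Mp`.
    obtain ⟨t, ht⟩ : ∃ t, t = ((Mp : ℝ) - S) / (Ms - S) := ⟨_, rfl⟩
    have ht0 : 0 ≤ t := ht ▸ div_nonneg (by linarith) hd.le
    have ht1 : t ≤ 1 := ht ▸ (div_le_one hd).2 (by linarith)
    have htd : t * (Ms - S) = Mp - S := by rw [ht, div_mul_cancel₀ _ hd.ne']
    refine ⟨fun k => (lam k / β k + t * (1 - lam k / β k)) / Mp, fun k => ⟨?_, ?_⟩, ?_, fun k => ?_⟩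
    · have := mul_nonneg ht0 (sub_nonneg.2 (hx1 k))
      exact div_nonneg (add_nonneg (hx0 k) this) hM.le
    · refine div_le_div_of_nonneg_right ?_ hM.le
      nlinarith [mul_nonneg (sub_nonneg.2 ht1) (sub_nonneg.2 (hx1 k))]
    · rw [← Finset.sum_div, Finset.sum_add_distrib, ← Finset.mul_sum, Finset.sum_sub_distrib,
        ← hSdef]
      simp only [Finset.sum_const, Finset.card_univ, Fintype.card_fin, nsmul_eq_mul, mul_one]
      rw [htd, add_sub_cancel, div_self hM.ne']
    · rw [mul_div_cancel₀ _ hM.ne', ← div_le_iff₀ (hβ k)]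
      exact le_add_of_nonneg_right (mul_nonneg ht0 (sub_nonneg.2 (hx1 k)))
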